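/- With G̃ (depending on q) and G_I(e^{iω}) as defined, for every subset I ⊆ {0,...,n-1} with |I| = k: as q → ∞, λ_min(G̃_I · G̃_Iᵀ) converges to min_{ω ∈ [-π,π]} λ_min(G_I(e^{iω}) · G_I(e^{iω})*) and λ_max(G̃_I · G̃_Iᵀ) converges to max_{ω ∈ [-π,π]} λ_max(G_I(e^{iω}) · G_I(e^{iω})*), where λ_min and λ_max denote smallest and largest eigenvalues and * denotes conjugate transpose. -/

import Mathlib

open Matrix

/-!
Read a message `u` of block size `q` as a vector of polynomials of degree `< q`. Then `u G̃_I` lists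
the coefficients of the polynomial vector `u(D) G_I(D)`, whose blocks are wide enough for nothing to
be truncated. By Parseval, `‖u‖²` and `‖u G̃_I‖²` are the averages over the unit circle of `‖u(z)‖²`
and `‖u(z) G_I(z)‖²`, so every eigenvalue of `G̃_I G̃_Iᵀ` lies between the extreme eigenvalues of
`G_I(z) G_I(z)*` over the circle.

These bounds are asymptotically attained. If `w` is a left eigenvector of `G_I(z) G_I(z)*`, take
`u(D) = w · E_q(D)` with `E_q = ∑_{m < q} (D / z)^m`. Since `(D - z) E_q = z ((D / z)^q - 1)`,
dividing a polynomial `h` by `D - z` shows that `h E_q` differs from `h(z) E_q` by boundedly many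
coefficients of size independent of `q`. Hence the Rayleigh quotient of `u` tends to that of `w`.
-/

section Spectrum

variable {n m : Type*} [Fintype n] [Fintype m]

lemma spectrum_map_algebraMap [DecidableEq n] {K : Type*} (L : Type*) [Field K] [Field L]
    [Algebra K L] (A : Matrix n n K) :
    spectrum K (A.map (algebraMap K L)) = spectrum K A := by
  ext μ
  have hmap : algebraMap K (Matrix n n L) μ - A.map (algebraMap K L) =
      (algebraMap K L).mapMatrix (algebraMap K (Matrix n n K) μ - A) := by
    ext i j
    simp [algebraMap_matrix_apply, apply_ite (algebraMap K L)]
  rw [spectrum.mem_iff, spectrum.mem_iff, hmap, isUnit_iff_isUnit_det, isUnit_iff_isUnit_det,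
    ← RingHom.map_det, isUnit_map_iff]

variable {𝕜 : Type*} [RCLike 𝕜]

lemma mem_spectrum_real_iff_exists_mulVec_eq_smul [DecidableEq n] {A : Matrix n n 𝕜} {μ : ℝ} :
    μ ∈ spectrum ℝ A ↔ ∃ v : n → 𝕜, v ≠ 0 ∧ A *ᵥ v = (μ : 𝕜) • v := by
  rw [← spectrum.algebraMap_mem_iff 𝕜, ← spectrum_toLin',
    ← Module.End.hasEigenvalue_iff_mem_spectrum]
  constructor
  · intro h
    obtain ⟨v, hv⟩ := h.exists_hasEigenvector
    exact ⟨v, hv.2, by simpa using hv.apply_eq_smul⟩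
  · rintro ⟨v, hv, hAv⟩
    exact Module.End.hasEigenvalue_of_hasEigenvector
      ⟨Module.End.mem_eigenspace_iff.mpr (by simpa using hAv), hv⟩

lemma star_dotProduct_self_eq_sum_sq_norm (x : n → 𝕜) :
    star x ⬝ᵥ x = ((∑ i, ‖x i‖ ^ 2 : ℝ) : 𝕜) := by
  simp [dotProduct, RCLike.conj_mul]

lemma star_dotProduct_mul_conjTranspose_mulVec (A : Matrix n m 𝕜) (x : n → 𝕜) :
    star x ⬝ᵥ ((A * Aᴴ) *ᵥ x) = ((∑ j, ‖(star x ᵥ* A) j‖ ^ 2 : ℝ) : 𝕜) := by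
  have hx : Aᴴ *ᵥ x = star (star x ᵥ* A) := by rw [star_vecMul, star_star]
  rw [← mulVec_mulVec, dotProduct_mulVec, hx, dotProduct_comm,
    star_dotProduct_self_eq_sum_sq_norm]

lemma exists_sum_sq_norm_vecMul_eq_of_mem_spectrum [DecidableEq n] {A : Matrix n m 𝕜} {μ : ℝ}
    (hμ : μ ∈ spectrum ℝ (A * Aᴴ)) :
    ∃ u : n → 𝕜, 0 < ∑ i, ‖u i‖ ^ 2 ∧ ∑ j, ‖(u ᵥ* A) j‖ ^ 2 = μ * ∑ i, ‖u i‖ ^ 2 := by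
  obtain ⟨x, hx, hAx⟩ := mem_spectrum_real_iff_exists_mulVec_eq_smul.mp hμ
  refine ⟨star x, ?_, ?_⟩
  · obtain ⟨i, hi⟩ := Function.ne_iff.mp hx
    exact Finset.sum_pos' (fun i _ => by positivity)
      ⟨i, Finset.mem_univ i, by simpa [sq_pos_iff] using hi⟩
  · apply RCLike.ofReal_injective (K := 𝕜)
    rw [← star_dotProduct_mul_conjTranspose_mulVec, hAx, dotProduct_smul,
      star_dotProduct_self_eq_sum_sq_norm]
    simp

lemma star_dotProduct_algebraMap_mulVec [DecidableEq n] (c : ℝ) (x : n → 𝕜) :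
    star x ⬝ᵥ (algebraMap ℝ (Matrix n n 𝕜) c *ᵥ x) = ((c * ∑ i, ‖star x i‖ ^ 2 : ℝ) : 𝕜) := by
  rw [Algebra.algebraMap_eq_smul_one, smul_mulVec, one_mulVec, dotProduct_smul,
    star_dotProduct_self_eq_sum_sq_norm]
  simp [RCLike.real_smul_eq_coe_mul]

open scoped MatrixOrder ComplexOrder in
lemma mem_lowerBounds_spectrum_mul_conjTranspose_iff [DecidableEq n] {A : Matrix n m 𝕜} {c : ℝ} :
    c ∈ lowerBounds (spectrum ℝ (A * Aᴴ)) ↔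
      ∀ u : n → 𝕜, c * ∑ i, ‖u i‖ ^ 2 ≤ ∑ j, ‖(u ᵥ* A) j‖ ^ 2 := by
  have hA : (A * Aᴴ).IsHermitian := isHermitian_mul_conjTranspose_self A
  have hc : (algebraMap ℝ (Matrix n n 𝕜) c).IsHermitian := IsSelfAdjoint.algebraMap _ (.all c)
  rw [mem_lowerBounds, ← algebraMap_le_iff_le_spectrum hA, le_iff,
    posSemidef_iff_dotProduct_mulVec, and_iff_right (hA.sub hc), star_involutive.surjective.forall]
  refine forall_congr' fun x => ?_
  rw [sub_mulVec, dotProduct_sub, star_dotProduct_mul_conjTranspose_mulVec,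
    star_dotProduct_algebraMap_mulVec, ← RCLike.ofReal_sub, RCLike.ofReal_nonneg, sub_nonneg,
    star_star]

open scoped MatrixOrder ComplexOrder in
lemma mem_upperBounds_spectrum_mul_conjTranspose_iff [DecidableEq n] {A : Matrix n m 𝕜} {c : ℝ} :
    c ∈ upperBounds (spectrum ℝ (A * Aᴴ)) ↔
      ∀ u : n → 𝕜, ∑ j, ‖(u ᵥ* A) j‖ ^ 2 ≤ c * ∑ i, ‖u i‖ ^ 2 := by
  have hA : (A * Aᴴ).IsHermitian := isHermitian_mul_conjTranspose_self A
  have hc : (algebraMap ℝ (Matrix n n 𝕜) c).IsHermitian := IsSelfAdjoint.algebraMap _ (.all c)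
  rw [mem_upperBounds, ← le_algebraMap_iff_spectrum_le hA, le_iff,
    posSemidef_iff_dotProduct_mulVec, and_iff_right (hc.sub hA), star_involutive.surjective.forall]
  refine forall_congr' fun x => ?_
  rw [sub_mulVec, dotProduct_sub, star_dotProduct_mul_conjTranspose_mulVec,
    star_dotProduct_algebraMap_mulVec, ← RCLike.ofReal_sub, RCLike.ofReal_nonneg, sub_nonneg,
    star_star]

end Spectrum

section Polynomial

open Polynomial Filter Topology

lemma sum_fin_sq_norm_coeff_eq_circleAverage {p : ℂ[X]} {N : ℕ} (hp : p ∈ degreeLT ℂ N) :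
    ∑ c : Fin N, ‖p.coeff c‖ ^ 2 = Real.circleAverage (fun z => ‖p.eval z‖ ^ 2) 0 1 := by
  rw [← p.sum_sq_norm_coeff_eq_circleAverage, Fin.sum_univ_eq_sum_range fun c => ‖p.coeff c‖ ^ 2]
  refine (Finset.sum_subset (fun c hc => ?_) fun c _ hc => ?_).symm
  · exact Finset.mem_range.mpr <| WithBot.coe_lt_coe.mp <|
      (le_degree_of_mem_supp c hc).trans_lt (mem_degreeLT.mp hp)
  · simp [notMem_support_iff.mp hc]

variable {F : Type*} [Field F]

/-- The truncated geometric series `∑_{m < q} (X / z)^m`, the polynomial form of the wave of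
frequency `z` observed on a window of length `q`. -/
noncomputable def geomPolynomial (z : F) (q : ℕ) : F[X] :=
  ∑ m ∈ Finset.range q, (C z⁻¹ * X) ^ m

lemma coeff_geomPolynomial_of_lt (z : F) {q c : ℕ} (hc : c < q) :
    (geomPolynomial z q).coeff c = z⁻¹ ^ c := by
  simp [geomPolynomial, mul_pow, ← C_pow, coeff_X_pow, hc]

lemma coeff_geomPolynomial_of_le (z : F) {q c : ℕ} (hc : q ≤ c) :
    (geomPolynomial z q).coeff c = 0 := by
  simp [geomPolynomial, mul_pow, ← C_pow, coeff_X_pow, hc.not_gt]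

lemma X_sub_C_mul_geomPolynomial {z : F} (hz : z ≠ 0) (q : ℕ) :
    (X - C z) * geomPolynomial z q = C z * (C (z⁻¹ ^ q) * X ^ q - 1) := by
  have hX : X - C z = C z * (C z⁻¹ * X - 1) := by
    rw [mul_sub, ← mul_assoc, ← C_mul, mul_inv_cancel₀ hz, C_1, one_mul, mul_one]
  rw [hX, mul_assoc, geomPolynomial, mul_geom_sum, mul_pow, C_pow]

lemma exists_mul_geomPolynomial_eq (h : F[X]) {z : F} (hz : z ≠ 0) :
    ∃ k : F[X], ∀ q, h * geomPolynomial z q =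
      C (h.eval z) * geomPolynomial z q + (C (z⁻¹ ^ q) * (k * X ^ q) - k) := by
  refine ⟨h /ₘ (X - C z) * C z, fun q => ?_⟩
  calc h * geomPolynomial z q
      = (C (h.eval z) + (X - C z) * (h /ₘ (X - C z))) * geomPolynomial z q := by
        rw [← modByMonic_X_sub_C_eq_C_eval, modByMonic_add_div]
    _ = C (h.eval z) * geomPolynomial z q +
          (h /ₘ (X - C z)) * ((X - C z) * geomPolynomial z q) := by ring
    _ = _ := by rw [X_sub_C_mul_geomPolynomial hz]; ring

lemma tendsto_average_sq_norm_coeff_mul_geomPolynomial (h : ℂ[X]) (z : Circle) (K : ℕ) :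
    Tendsto (fun q : ℕ => (q : ℝ)⁻¹ *
        ∑ c : Fin (q + K), ‖(h * geomPolynomial (z : ℂ) q).coeff c‖ ^ 2)
      atTop (𝓝 (‖h.eval (z : ℂ)‖ ^ 2)) := by
  obtain ⟨k, hk⟩ := exists_mul_geomPolynomial_eq h z.coe_ne_zero
  have coeff_low (q c : ℕ) (hc : c < q) : (h * geomPolynomial (z : ℂ) q).coeff c =
      h.eval (z : ℂ) * (z : ℂ)⁻¹ ^ c - k.coeff c := by
    rw [hk, coeff_add, coeff_sub, coeff_C_mul, coeff_C_mul, coeff_geomPolynomial_of_lt _ hc,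
      coeff_mul_X_pow', if_neg hc.not_ge, mul_zero, zero_sub, sub_eq_add_neg]
  have norm_coeff_high {q : ℕ} (hq : k.natDegree < q) (c : ℕ) :
      ‖(h * geomPolynomial (z : ℂ) q).coeff (q + c)‖ = ‖k.coeff c‖ := by
    simp [hk, coeff_geomPolynomial_of_le, coeff_mul_X_pow', Circle.norm_coe,
      coeff_eq_zero_of_natDegree_lt (hq.trans_le (Nat.le_add_right q c))]
  have tendsto_low : Tendsto (fun c => ‖h.eval (z : ℂ) * (z : ℂ)⁻¹ ^ c - k.coeff c‖ ^ 2) atTop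
      (𝓝 (‖h.eval (z : ℂ)‖ ^ 2)) := by
    refine tendsto_const_nhds.congr' ?_
    filter_upwards [eventually_gt_atTop k.natDegree] with c hc
    simp [coeff_eq_zero_of_natDegree_lt hc, Circle.norm_coe]
  have tendsto_high : Tendsto (fun q : ℕ => (q : ℝ)⁻¹ * ∑ c ∈ Finset.range K, ‖k.coeff c‖ ^ 2)
      atTop (𝓝 0) := by
    simpa using tendsto_inv_atTop_nhds_zero_nat.mul_const (∑ c ∈ Finset.range K, ‖k.coeff c‖ ^ 2)
  rw [← add_zero (‖h.eval (z : ℂ)‖ ^ 2)]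
  refine (tendsto_low.cesaro.add tendsto_high).congr' ?_
  filter_upwards [eventually_gt_atTop k.natDegree] with q hq
  rw [← mul_add, Fin.sum_univ_eq_sum_range fun c => ‖(h * geomPolynomial (z : ℂ) q).coeff c‖ ^ 2,
    Finset.sum_range_add]
  simp only [norm_coeff_high hq]
  congr 2
  exact Finset.sum_congr rfl fun c hc => by rw [coeff_low q c (Finset.mem_range.mp hc)]

end Polynomial

section Sliding

open Polynomial Filter Topology Real

lemma sum_sum_fin_sq_norm_coeff_eq_circleAverage {κ : Type*} [Fintype κ] {p : κ → ℂ[X]}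
    {N : κ → ℕ} (hp : ∀ l, p l ∈ degreeLT ℂ (N l)) :
    ∑ l, ∑ c : Fin (N l), ‖(p l).coeff c‖ ^ 2 =
      circleAverage (fun z => ∑ l, ‖(p l).eval z‖ ^ 2) 0 1 := by
  rw [circleAverage_fun_sum fun l _ => ContinuousOn.circleIntegrable zero_le_one (by fun_prop)]
  exact Finset.sum_congr rfl fun l _ => sum_fin_sq_norm_coeff_eq_circleAverage (hp l)

section Algebra

variable {ι κ R : Type*}

/-- The rows `g i * X ^ m` with `i : ι`, `m < q`, each written as its list of `N` lowest
coefficients. It is the block column of the sliding-window generator matrix produced by one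
column `g` of a polynomial generator matrix. -/
noncomputable def slidingBlock [Semiring R] (g : ι → R[X]) (q N : ℕ) :
    Matrix (ι × Fin q) (Fin N) R :=
  of fun p c => (g p.1 * X ^ (p.2 : ℕ)).coeff c

/-- The matrix of `u ↦ u * G` on row vectors `u` of polynomials of degree `< q`, in the monomial
bases. The entries in column `l` of the product are recorded below degree `q + K l`, so nothing
is lost as soon as `K l` bounds the degrees in column `l` of `G`. -/
noncomputable def slidingMatrix [Semiring R] (G : Matrix ι κ R[X]) (K : κ → ℕ) (q : ℕ) :
    Matrix (ι × Fin q) (Σ l, Fin (q + K l)) R :=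
  of fun p c => slidingBlock (G.col c.1) q (q + K c.1) p c.2

/-- The vector of polynomials of degree `< q` whose coefficients are listed by `u`. -/
noncomputable def messagePolynomial [Semiring R] {q : ℕ} (u : ι × Fin q → R) (i : ι) : R[X] :=
  ∑ m : Fin q, C (u (i, m)) * X ^ (m : ℕ)

lemma coeff_messagePolynomial [Semiring R] {q : ℕ} (u : ι × Fin q → R) (i : ι) (m : Fin q) :
    (messagePolynomial u i).coeff m = u (i, m) := by
  simp [messagePolynomial, coeff_X_pow, Fin.val_inj]

lemma messagePolynomial_mem_degreeLT [Semiring R] {q : ℕ} (u : ι × Fin q → R) (i : ι) :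
    messagePolynomial u i ∈ degreeLT R q :=
  Submodule.sum_mem _ fun m _ => mem_degreeLT.mpr <|
    (degree_C_mul_X_pow_le _ _).trans_lt (WithBot.coe_lt_coe.mpr m.isLt)

/-- The vector `w` carried by the wave `m ↦ z⁻ᵐ` on a window of length `q`, the test vector that
makes the sliding matrix act asymptotically like the symbol at `z`. -/
def truncatedWave {F : Type*} [Field F] (w : ι → F) (z : F) (q : ℕ) (p : ι × Fin q) : F :=
  w p.1 * z⁻¹ ^ (p.2 : ℕ)

lemma messagePolynomial_truncatedWave {F : Type*} [Field F] (w : ι → F) (z : F) (q : ℕ) (i : ι) :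
    messagePolynomial (truncatedWave w z q) i = C (w i) * geomPolynomial z q := by
  simp only [messagePolynomial, truncatedWave, geomPolynomial, Finset.mul_sum, C_mul, C_pow,
    mul_pow, mul_assoc]
  exact Fin.sum_univ_eq_sum_range (fun m => C (w i) * (C z⁻¹ ^ m * X ^ m)) q

lemma mul_mem_degreeLT [Semiring R] {p g : R[X]} {q K : ℕ} (hp : p ∈ degreeLT R q)
    (hg : g.natDegree ≤ K) : p * g ∈ degreeLT R (q + K) := by
  rcases eq_or_ne p 0 with rfl | hp0
  · simp
  rw [mem_degreeLT, degree_eq_natDegree hp0, Nat.cast_lt] at hp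
  exact mem_degreeLT.mpr <| degree_le_natDegree.trans_lt <| Nat.cast_lt.mpr <|
    natDegree_mul_le.trans_lt (add_lt_add_of_lt_of_le hp hg)

/-- The Gram matrix of the rows of the sliding matrix. -/
noncomputable def slidingGram [Fintype κ] [Semiring R] [StarRing R] (G : Matrix ι κ R[X])
    (K : κ → ℕ) (q : ℕ) : Matrix (ι × Fin q) (ι × Fin q) R :=
  slidingMatrix G K q * (slidingMatrix G K q)ᴴ

lemma slidingGram_eq_sum [Fintype κ] [Semiring R] [StarRing R] (G : Matrix ι κ R[X])
    (K : κ → ℕ) (q : ℕ) :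
    slidingGram G K q =
      ∑ l, slidingBlock (G.col l) q (q + K l) * (slidingBlock (G.col l) q (q + K l))ᴴ := by
  ext p p'
  simp [slidingGram, slidingMatrix, mul_apply, Fintype.sum_sigma, Matrix.sum_apply]

variable [Fintype ι] [CommSemiring R]

lemma vecMul_slidingMatrix (G : Matrix ι κ R[X]) (K : κ → ℕ) {q : ℕ} (u : ι × Fin q → R)
    (l : κ) (c : Fin (q + K l)) :
    (u ᵥ* slidingMatrix G K q) ⟨l, c⟩ = ((messagePolynomial u ᵥ* G) l).coeff c := by
  simp only [vecMul, dotProduct, Fintype.sum_prod_type, messagePolynomial, Finset.sum_mul,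
    finsetSum_coeff, mul_assoc, coeff_C_mul, slidingMatrix, slidingBlock, of_apply, col_apply,
    X_pow_mul]

lemma messagePolynomial_vecMul_mem_degreeLT {G : Matrix ι κ R[X]} {K : κ → ℕ}
    (hK : ∀ i l, (G i l).natDegree ≤ K l) {q : ℕ} (u : ι × Fin q → R) (l : κ) :
    (messagePolynomial u ᵥ* G) l ∈ degreeLT R (q + K l) :=
  Submodule.sum_mem _ fun i _ => mul_mem_degreeLT (messagePolynomial_mem_degreeLT u i) (hK i l)

lemma eval_vecMul (p : ι → R[X]) (G : Matrix ι κ R[X]) (z : R) (l : κ) :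
    ((p ᵥ* G) l).eval z = ((fun i => (p i).eval z) ᵥ* G.map (eval z)) l := by
  simp [vecMul, dotProduct, eval_finsetSum]

end Algebra

variable {ι κ : Type*} [Fintype ι] [Fintype κ]

lemma sum_sq_norm_eq_circleAverage {q : ℕ} (u : ι × Fin q → ℂ) :
    ∑ p, ‖u p‖ ^ 2 = circleAverage (fun z => ∑ i, ‖(messagePolynomial u i).eval z‖ ^ 2) 0 1 := by
  rw [← sum_sum_fin_sq_norm_coeff_eq_circleAverage (messagePolynomial_mem_degreeLT u),
    Fintype.sum_prod_type]
  simp only [coeff_messagePolynomial]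

lemma sum_sq_norm_vecMul_slidingMatrix_eq_circleAverage {G : Matrix ι κ ℂ[X]} {K : κ → ℕ}
    (hK : ∀ i l, (G i l).natDegree ≤ K l) {q : ℕ} (u : ι × Fin q → ℂ) :
    ∑ c, ‖(u ᵥ* slidingMatrix G K q) c‖ ^ 2 =
      circleAverage (fun z =>
        ∑ l, ‖((fun i => (messagePolynomial u i).eval z) ᵥ* G.map (eval z)) l‖ ^ 2) 0 1 := by
  simp only [← eval_vecMul]
  rw [← sum_sum_fin_sq_norm_coeff_eq_circleAverage (messagePolynomial_vecMul_mem_degreeLT hK u),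
    Fintype.sum_sigma]
  simp only [vecMul_slidingMatrix]

lemma sum_sq_norm_truncatedWave (w : ι → ℂ) (z : Circle) (q : ℕ) :
    ∑ p, ‖truncatedWave w (z : ℂ) q p‖ ^ 2 = q * ∑ i, ‖w i‖ ^ 2 := by
  simp [truncatedWave, Fintype.sum_prod_type, Finset.mul_sum, Circle.norm_coe]

lemma tendsto_average_sq_norm_truncatedWave_vecMul (G : Matrix ι κ ℂ[X]) (K : κ → ℕ)
    (w : ι → ℂ) (z : Circle) :
    Tendsto (fun q : ℕ => (q : ℝ)⁻¹ *
        ∑ c, ‖(truncatedWave w (z : ℂ) q ᵥ* slidingMatrix G K q) c‖ ^ 2)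
      atTop (𝓝 (∑ l, ‖(w ᵥ* G.map (eval (z : ℂ))) l‖ ^ 2)) := by
  have message_vecMul (q : ℕ) (l : κ) : (messagePolynomial (truncatedWave w (z : ℂ) q) ᵥ* G) l =
      ((fun i => C (w i)) ᵥ* G) l * geomPolynomial (z : ℂ) q := by
    simp only [vecMul, dotProduct, messagePolynomial_truncatedWave, Finset.sum_mul]
    exact Finset.sum_congr rfl fun i _ => mul_right_comm _ _ _
  have eval_eq (l : κ) : (w ᵥ* G.map (eval (z : ℂ))) l =
      (((fun i => C (w i)) ᵥ* G) l).eval (z : ℂ) := by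
    simp only [eval_vecMul, eval_C]
  simp only [Fintype.sum_sigma, vecMul_slidingMatrix, message_vecMul, Finset.mul_sum, eval_eq]
  refine tendsto_finsetSum _ fun l _ => ?_
  simp only [← Finset.mul_sum]
  exact tendsto_average_sq_norm_coeff_mul_geomPolynomial _ z (K l)

variable [DecidableEq ι]

/-- The eigenvalues of the Gram matrices `G(z) * G(z)ᴴ` of the symbol `G`, as `z` runs over the
unit circle. -/
def symbolSpectrum (G : Matrix ι κ ℂ[X]) : Set ℝ :=
  ⋃ z : Circle, spectrum ℝ (G.map (eval (z : ℂ)) * (G.map (eval (z : ℂ)))ᴴ)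

lemma mem_lowerBounds_spectrum_slidingGram {G : Matrix ι κ ℂ[X]} {K : κ → ℕ}
    (hK : ∀ i l, (G i l).natDegree ≤ K l) {L : ℝ} (hL : L ∈ lowerBounds (symbolSpectrum G))
    (q : ℕ) : L ∈ lowerBounds (spectrum ℝ (slidingGram G K q)) := by
  rw [slidingGram, mem_lowerBounds_spectrum_mul_conjTranspose_iff]
  intro u
  rw [sum_sq_norm_vecMul_slidingMatrix_eq_circleAverage hK, sum_sq_norm_eq_circleAverage,
    ← smul_eq_mul, ← circleAverage_fun_smul]
  refine circleAverage_mono (ContinuousOn.circleIntegrable zero_le_one (by fun_prop))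
    (ContinuousOn.circleIntegrable zero_le_one ?_) fun z hz => ?_
  · simp only [← eval_vecMul]
    fun_prop
  · have hz : z ∈ Submonoid.unitSphere ℂ := mem_sphere_zero_iff_norm.mpr (by simpa using hz)
    exact mem_lowerBounds_spectrum_mul_conjTranspose_iff.mp
      (lowerBounds_mono_set (Set.subset_iUnion _ (⟨z, hz⟩ : Circle)) hL) _

lemma mem_upperBounds_spectrum_slidingGram {G : Matrix ι κ ℂ[X]} {K : κ → ℕ}
    (hK : ∀ i l, (G i l).natDegree ≤ K l) {L : ℝ} (hL : L ∈ upperBounds (symbolSpectrum G))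
    (q : ℕ) : L ∈ upperBounds (spectrum ℝ (slidingGram G K q)) := by
  rw [slidingGram, mem_upperBounds_spectrum_mul_conjTranspose_iff]
  intro u
  rw [sum_sq_norm_vecMul_slidingMatrix_eq_circleAverage hK, sum_sq_norm_eq_circleAverage,
    ← smul_eq_mul, ← circleAverage_fun_smul]
  refine circleAverage_mono (ContinuousOn.circleIntegrable zero_le_one ?_)
    (ContinuousOn.circleIntegrable zero_le_one (by fun_prop)) fun z hz => ?_
  · simp only [← eval_vecMul]
    fun_prop
  · have hz : z ∈ Submonoid.unitSphere ℂ := mem_sphere_zero_iff_norm.mpr (by simpa using hz)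
    exact mem_upperBounds_spectrum_mul_conjTranspose_iff.mp
      (upperBounds_mono_set (Set.subset_iUnion _ (⟨z, hz⟩ : Circle)) hL) _

lemma exists_tendsto_rayleigh_of_mem_symbolSpectrum {G : Matrix ι κ ℂ[X]} {μ : ℝ}
    (hμ : μ ∈ symbolSpectrum G) (K : κ → ℕ) :
    ∃ u : (q : ℕ) → ι × Fin q → ℂ, (∀ q, 0 < q → 0 < ∑ p, ‖u q p‖ ^ 2) ∧
      Tendsto (fun q => (∑ c, ‖(u q ᵥ* slidingMatrix G K q) c‖ ^ 2) / ∑ p, ‖u q p‖ ^ 2)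
        atTop (𝓝 μ) := by
  obtain ⟨z, hz⟩ := Set.mem_iUnion.mp hμ
  obtain ⟨w, hw, hμw⟩ := exists_sum_sq_norm_vecMul_eq_of_mem_spectrum hz
  refine ⟨truncatedWave w (z : ℂ), fun q hq => ?_, ?_⟩
  · rw [sum_sq_norm_truncatedWave]
    positivity
  · have average :=
      (tendsto_average_sq_norm_truncatedWave_vecMul G K w z).div_const (∑ i, ‖w i‖ ^ 2)
    rw [hμw, mul_div_cancel_right₀ _ hw.ne'] at average
    simpa only [sum_sq_norm_truncatedWave, ← div_eq_inv_mul, div_div] using average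

lemma tendsto_of_isLeast_spectrum_slidingGram {G : Matrix ι κ ℂ[X]} {K : κ → ℕ}
    (hK : ∀ i l, (G i l).natDegree ≤ K l) {lmin : ℕ → ℝ}
    (hlmin : ∀ q, 0 < q → IsLeast (spectrum ℝ (slidingGram G K q)) (lmin q))
    {Lmin : ℝ} (hLmin : IsLeast (symbolSpectrum G) Lmin) : Tendsto lmin atTop (𝓝 Lmin) := by
  obtain ⟨u, hu, rayleigh⟩ := exists_tendsto_rayleigh_of_mem_symbolSpectrum hLmin.1 K
  refine tendsto_of_tendsto_of_tendsto_of_le_of_le' tendsto_const_nhds rayleigh ?_ ?_ <;>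
    filter_upwards [eventually_gt_atTop 0] with q hq
  · exact mem_lowerBounds_spectrum_slidingGram hK hLmin.2 q (hlmin q hq).1
  · exact (le_div_iff₀ (hu q hq)).mpr <|
      mem_lowerBounds_spectrum_mul_conjTranspose_iff.mp (hlmin q hq).2 (u q)

lemma tendsto_of_isGreatest_spectrum_slidingGram {G : Matrix ι κ ℂ[X]} {K : κ → ℕ}
    (hK : ∀ i l, (G i l).natDegree ≤ K l) {lmax : ℕ → ℝ}
    (hlmax : ∀ q, 0 < q → IsGreatest (spectrum ℝ (slidingGram G K q)) (lmax q))
    {Lmax : ℝ} (hLmax : IsGreatest (symbolSpectrum G) Lmax) : Tendsto lmax atTop (𝓝 Lmax) := by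
  obtain ⟨u, hu, rayleigh⟩ := exists_tendsto_rayleigh_of_mem_symbolSpectrum hLmax.1 K
  refine tendsto_of_tendsto_of_tendsto_of_le_of_le' rayleigh tendsto_const_nhds ?_ ?_ <;>
    filter_upwards [eventually_gt_atTop 0] with q hq
  · exact (div_le_iff₀ (hu q hq)).mpr <|
      mem_upperBounds_spectrum_mul_conjTranspose_iff.mp (hlmax q hq).2 (u q)
  · exact mem_upperBounds_spectrum_slidingGram hK hLmax.2 q (hlmax q hq).1

theorem gram_of_GI_extreme_eigenvalue_limits_general (G : Matrix ι κ ℂ[X]) (K : κ → ℕ)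
    (hK : ∀ i l, (G i l).natDegree ≤ K l) (lmin lmax : ℕ → ℝ)
    (hlmin : ∀ q, 0 < q → IsLeast (spectrum ℝ (slidingGram G K q)) (lmin q))
    (hlmax : ∀ q, 0 < q → IsGreatest (spectrum ℝ (slidingGram G K q)) (lmax q))
    (Lmin Lmax : ℝ) (hLmin : IsLeast (symbolSpectrum G) Lmin)
    (hLmax : IsGreatest (symbolSpectrum G) Lmax) :
    Tendsto lmin atTop (𝓝 Lmin) ∧ Tendsto lmax atTop (𝓝 Lmax) :=
  ⟨tendsto_of_isLeast_spectrum_slidingGram hK hlmin hLmin,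
    tendsto_of_isGreatest_spectrum_slidingGram hK hlmax hLmax⟩

end Sliding

section Systematic

open Polynomial

lemma mem_symbolSpectrum_iff {ι κ : Type*} [Fintype ι] [Fintype κ] [DecidableEq ι]
    {G : Matrix ι κ ℂ[X]} {ν : ℝ} :
    ν ∈ symbolSpectrum G ↔ ∃ ω ∈ Set.Icc (-Real.pi) Real.pi, ∃ w : ι → ℂ, w ≠ 0 ∧
      (G.map (eval (Circle.exp ω : ℂ)) * (G.map (eval (Circle.exp ω : ℂ)))ᴴ) *ᵥ w =
        (ν : ℂ) • w := by
  rw [symbolSpectrum, Set.mem_iUnion]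
  simp only [mem_spectrum_real_iff_exists_mulVec_eq_smul]
  constructor
  · rintro ⟨z, hz⟩
    exact ⟨(z : ℂ).arg, ⟨(Complex.neg_pi_lt_arg z).le, Complex.arg_le_pi z⟩,
      by rwa [Circle.exp_arg]⟩
  · rintro ⟨ω, -, hω⟩
    exact ⟨Circle.exp ω, hω⟩

lemma sum_eq_sum_orderEmbOfFin {α M : Type*} [LinearOrder α] [AddCommMonoid M] {I : Finset α}
    {t : ℕ} (hI : I.card = t) (f : α → M) : ∑ l ∈ I, f l = ∑ c, f (I.orderEmbOfFin hI c) := by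
  conv_lhs => rw [← I.map_orderEmbOfFin_univ hI, Finset.sum_map]
  rfl

section Generator

variable {ι R : Type*} {k s : ℕ} [Semiring R]

lemma slidingBlock_one_col_apply [DecidableEq ι] (l : ι) {q : ℕ} (i : ι) (m c : Fin q) :
    slidingBlock ((1 : Matrix ι ι R[X]).col l) q q (i, m) c = if i = l ∧ m = c then 1 else 0 := by
  rcases eq_or_ne i l with rfl | hi
  · simp [slidingBlock, coeff_X_pow, Fin.val_inj, eq_comm]
  · simp [slidingBlock, hi]

lemma slidingBlock_monomial_apply (d : ι → ℕ) (t : ι → R) {q N : ℕ} (i : ι) (m : Fin q)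
    (c : Fin N) :
    slidingBlock (fun i => monomial (d i) (t i)) q N (i, m) c =
      t i * if (c : ℕ) = d i + m then 1 else 0 := by
  simp [slidingBlock, monomial_mul_X_pow, coeff_monomial, eq_comm]

/-- The systematic generator matrix `G(D) = [I_k | R ∘ Y(D)]`, with `D = X`. -/
noncomputable def systematicGenerator (a : Fin s → ℕ) (b : Fin k → ℕ) (r : Fin k → Fin s → R) :
    Matrix (Fin k) (Fin (k + s)) R[X] :=
  (fromCols 1 (of fun i j => monomial (a j * b i) (r i j))).submatrix id finSumFinEquiv.symm

lemma systematicGenerator_castAdd (a : Fin s → ℕ) (b : Fin k → ℕ) (r : Fin k → Fin s → R)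
    (i l : Fin k) : systematicGenerator a b r i (Fin.castAdd s l) = (1 : Matrix _ _ R[X]) i l := by
  simp [systematicGenerator]

lemma systematicGenerator_natAdd (a : Fin s → ℕ) (b : Fin k → ℕ) (r : Fin k → Fin s → R)
    (i : Fin k) (j : Fin s) :
    systematicGenerator a b r i (Fin.natAdd k j) = monomial (a j * b i) (r i j) := by
  simp [systematicGenerator]

/-- The excess of the width of each block column of `G̃` over the block size, where `d` stands for
the largest exponent `b_{k-1}`. -/
def blockOverhang (k : ℕ) (a : Fin s → ℕ) (d : ℕ) : Fin (k + s) → ℕ :=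
  Fin.addCases (fun _ => 0) fun j => a j * d

lemma natDegree_systematicGenerator_le (a : Fin s → ℕ) {b : Fin k → ℕ} {d : ℕ}
    (hd : ∀ i, b i ≤ d) (r : Fin k → Fin s → R) (i : Fin k) (l : Fin (k + s)) :
    (systematicGenerator a b r i l).natDegree ≤ blockOverhang k a d l := by
  induction l using Fin.addCases with
  | left l =>
    rw [systematicGenerator_castAdd]
    rcases eq_or_ne i l with rfl | hi
    · simp
    · simp [hi]
  | right j =>
    rw [systematicGenerator_natAdd, blockOverhang, Fin.addCases_right]
    exact (natDegree_monomial_le (r i j)).trans (Nat.mul_le_mul_left (a j) (hd i))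

end Generator

/-- The columns of the complexified systematic generator matrix indexed by `I`, in increasing
order. -/
noncomputable def selectedGenerator {k s t : ℕ} (a : Fin s → ℕ) (b : Fin k → ℕ)
    (r : Fin k → Fin s → ℝ) {I : Finset (Fin (k + s))} (hI : I.card = t) :
    Matrix (Fin k) (Fin t) ℂ[X] :=
  (systematicGenerator a b fun i j => (r i j : ℂ)).submatrix id (I.orderEmbOfFin hI)

variable {k s : ℕ} {a : Fin s → ℕ} {b : Fin k → ℕ} {r : Fin k → Fin s → ℝ}

lemma eval_systematicGenerator (ω : ℝ) (i : Fin k) (l : Fin (k + s)) :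
    (systematicGenerator a b (fun i j => (r i j : ℂ)) i l).eval (Circle.exp ω : ℂ) =
      if hl : (l : ℕ) < k then (if (i : ℕ) = l then 1 else 0)
      else (r i ⟨l - k, by omega⟩ : ℂ) *
        Complex.exp (Complex.I * ω * ((a ⟨l - k, by omega⟩ * b i : ℕ) : ℂ)) := by
  induction l using Fin.addCases with
  | left l => simp [systematicGenerator_castAdd, one_apply, apply_ite, Fin.val_inj]
  | right j =>
    rw [systematicGenerator_natAdd, eval_monomial, Circle.coe_exp, ← Complex.exp_nat_mul,
      dif_neg (by simp)]
    simp [mul_comm]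

lemma map_ofReal_mul_transpose {n m : Type*} [Fintype m] (A : Matrix n m ℝ) :
    (A * Aᵀ).map (algebraMap ℝ ℂ) = A.map (algebraMap ℝ ℂ) * (A.map (algebraMap ℝ ℂ))ᴴ := by
  ext i j
  simp [mul_apply]

variable {d q : ℕ} {Gmsg : Fin k → Matrix (Fin k × Fin q) (Fin q) ℝ}
  {Gpar : (j : Fin s) → Matrix (Fin k × Fin q) (Fin (q + a j * d)) ℝ}

lemma map_blockGram_eq_slidingBlock_mul_conjTranspose
    (hGmsg : ∀ l i m c, Gmsg l (i, m) c = if i = l ∧ m = c then 1 else 0)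
    (hGpar : ∀ j i m (c : Fin (q + a j * d)),
      Gpar j (i, m) c = r i j * if (c : ℕ) = a j * b i + m then 1 else 0) (l : Fin (k + s)) :
    (if hl : (l : ℕ) < k then Gmsg ⟨l, hl⟩ * (Gmsg ⟨l, hl⟩)ᵀ
      else (fun P => P * Pᵀ) (Gpar ⟨l - k, by omega⟩)).map (algebraMap ℝ ℂ) =
    slidingBlock ((systematicGenerator a b fun i j => (r i j : ℂ)).col l) q
        (q + blockOverhang k a d l) *
      (slidingBlock ((systematicGenerator a b fun i j => (r i j : ℂ)).col l) q
        (q + blockOverhang k a d l))ᴴ := by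
  induction l using Fin.addCases with
  | left l =>
    have hcol : (systematicGenerator a b fun i j => (r i j : ℂ)).col (Fin.castAdd s l) =
        (1 : Matrix _ _ ℂ[X]).col l := funext fun i => systematicGenerator_castAdd ..
    have hmap : (Gmsg l).map (algebraMap ℝ ℂ) =
        slidingBlock ((1 : Matrix (Fin k) (Fin k) ℂ[X]).col l) q q := by
      ext ⟨i, m⟩ c
      simp [hGmsg, slidingBlock_one_col_apply, apply_ite]
    rw [dif_pos (by simp), blockOverhang, Fin.addCases_left, hcol, add_zero, ← hmap]
    exact map_ofReal_mul_transpose (Gmsg l)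
  | right j =>
    have hcol : (systematicGenerator a b fun i j => (r i j : ℂ)).col (Fin.natAdd k j) =
        fun i => monomial (a j * b i) (r i j : ℂ) := funext fun i => systematicGenerator_natAdd ..
    have hmap : (Gpar j).map (algebraMap ℝ ℂ) =
        slidingBlock (fun i => monomial (a j * b i) (r i j : ℂ)) q (q + a j * d) := by
      ext ⟨i, m⟩ c
      rw [map_apply, hGpar, slidingBlock_monomial_apply]
      simp [apply_ite Complex.ofReal]
    have hj : (⟨(Fin.natAdd k j : ℕ) - k, by simp⟩ : Fin s) = j := by ext; simp
    rw [dif_neg (by simp), blockOverhang, Fin.addCases_right, hcol, ← hmap,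
      ← map_ofReal_mul_transpose]
    exact congrArg (fun j => (Gpar j * (Gpar j)ᵀ).map (algebraMap ℝ ℂ)) hj

lemma map_gram_eq_slidingGram
    (hGmsg : ∀ l i m c, Gmsg l (i, m) c = if i = l ∧ m = c then 1 else 0)
    (hGpar : ∀ j i m (c : Fin (q + a j * d)),
      Gpar j (i, m) c = r i j * if (c : ℕ) = a j * b i + m then 1 else 0)
    {I : Finset (Fin (k + s))} {t : ℕ} (hI : I.card = t) :
    (∑ l ∈ I, if hl : (l : ℕ) < k then Gmsg ⟨l, hl⟩ * (Gmsg ⟨l, hl⟩)ᵀ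
      else (fun P => P * Pᵀ) (Gpar ⟨l - k, by omega⟩)).map (algebraMap ℝ ℂ) =
    slidingGram (selectedGenerator a b r hI) (blockOverhang k a d ∘ I.orderEmbOfFin hI) q := by
  rw [slidingGram_eq_sum, ← (algebraMap ℝ ℂ).mapMatrix_apply, map_sum,
    sum_eq_sum_orderEmbOfFin hI]
  exact Finset.sum_congr rfl fun c _ =>
    map_blockGram_eq_slidingBlock_mul_conjTranspose hGmsg hGpar (I.orderEmbOfFin hI c)

end Systematic

/-- as `q → ∞`, the smallest eigenvalue of `G̃_I·G̃_Iᵀ` converges to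
`min_{ω ∈ [-π,π]} λ_min(G_I(e^{iω})·G_I(e^{iω})*)` and the largest eigenvalue
converges to `max_{ω ∈ [-π,π]} λ_max(G_I(e^{iω})·G_I(e^{iω})*)`. -/
theorem gram_of_GI_extreme_eigenvalue_limits
    (k s : ℕ) (hk : 0 < k) (hs : 0 < s)
    (a : Fin s → ℕ) (b : Fin k → ℕ) (ha : StrictMono a) (hb : StrictMono b)
    (r : Fin k → Fin s → ℝ)
    (Gmsg : (q : ℕ) → Fin k → Matrix (Fin k × Fin q) (Fin q) ℝ)
    (hGmsg : ∀ (q : ℕ) (ℓ : Fin k) (i : Fin k) (m : Fin q) (c : Fin q),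
      Gmsg q ℓ (i, m) c = if i = ℓ ∧ m = c then 1 else 0)
    (Gpar : (q : ℕ) → (j : Fin s) →
      Matrix (Fin k × Fin q) (Fin (q + a j * b ⟨k - 1, by omega⟩)) ℝ)
    (hGpar : ∀ (q : ℕ) (j : Fin s) (i : Fin k) (m : Fin q)
        (c : Fin (q + a j * b ⟨k - 1, by omega⟩)),
      Gpar q j (i, m) c = r i j * (if (c : ℕ) = a j * b i + (m : ℕ) then 1 else 0))
    (I : Finset (Fin (k + s))) (hI : I.card = k)
    -- `B q = G̃_I · G̃_Iᵀ` for block size `q`: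
    (B : (q : ℕ) → Matrix (Fin k × Fin q) (Fin k × Fin q) ℝ)
    (hB : ∀ q : ℕ, B q = ∑ ℓ ∈ I,
      if hℓ : (ℓ : ℕ) < k
        then Gmsg q ⟨(ℓ : ℕ), hℓ⟩ * (Gmsg q ⟨(ℓ : ℕ), hℓ⟩)ᵀ
        else (fun P => P * Pᵀ) (Gpar q ⟨(ℓ : ℕ) - k, by have := ℓ.isLt; omega⟩))
    -- `GIom ω = G_I(e^{iω})`, the columns of `G(D)` indexed by `I` with `D = e^{iω}`:
    (GIom : ℝ → Matrix (Fin k) (Fin k) ℂ)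
    (hGIom : ∀ (ω : ℝ) (i c : Fin k),
      GIom ω i c =
        if hcol : ((I.orderEmbOfFin hI c : Fin (k + s)) : ℕ) < k
          then (if (i : ℕ) = ((I.orderEmbOfFin hI c : Fin (k + s)) : ℕ) then 1 else 0)
          else ((r i ⟨((I.orderEmbOfFin hI c : Fin (k + s)) : ℕ) - k,
              by have := (I.orderEmbOfFin hI c).isLt; omega⟩ : ℝ) : ℂ) *
            Complex.exp (Complex.I * (ω : ℂ) *
              ((a ⟨((I.orderEmbOfFin hI c : Fin (k + s)) : ℕ) - k,
                  by have := (I.orderEmbOfFin hI c).isLt; omega⟩ * b i : ℕ) : ℂ)))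
    (lmin lmax : ℕ → ℝ)
    -- `lmin q` / `lmax q` are the smallest / largest eigenvalues of `G̃_I·G̃_Iᵀ`:
    (hlmin : ∀ q : ℕ, 0 < q →
      (∃ v : Fin k × Fin q → ℝ, v ≠ 0 ∧ (B q).mulVec v = lmin q • v) ∧
      ∀ μ : ℝ, (∃ v : Fin k × Fin q → ℝ, v ≠ 0 ∧ (B q).mulVec v = μ • v) → lmin q ≤ μ)
    (hlmax : ∀ q : ℕ, 0 < q →
      (∃ v : Fin k × Fin q → ℝ, v ≠ 0 ∧ (B q).mulVec v = lmax q • v) ∧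
      ∀ μ : ℝ, (∃ v : Fin k × Fin q → ℝ, v ≠ 0 ∧ (B q).mulVec v = μ • v) → μ ≤ lmax q)
    (Lmin Lmax : ℝ)
    -- `Lmin = min_{ω ∈ [-π,π]} λ_min(G_I(e^{iω})·G_I(e^{iω})*)`:
    (hLmin : (∃ ω ∈ Set.Icc (-Real.pi) Real.pi, ∃ w : Fin k → ℂ, w ≠ 0 ∧
        (GIom ω * (GIom ω)ᴴ).mulVec w = (Lmin : ℂ) • w) ∧
      ∀ ω ∈ Set.Icc (-Real.pi) Real.pi, ∀ ν : ℝ,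
        (∃ w : Fin k → ℂ, w ≠ 0 ∧ (GIom ω * (GIom ω)ᴴ).mulVec w = (ν : ℂ) • w) →
          Lmin ≤ ν)
    -- `Lmax = max_{ω ∈ [-π,π]} λ_max(G_I(e^{iω})·G_I(e^{iω})*)`:
    (hLmax : (∃ ω ∈ Set.Icc (-Real.pi) Real.pi, ∃ w : Fin k → ℂ, w ≠ 0 ∧
        (GIom ω * (GIom ω)ᴴ).mulVec w = (Lmax : ℂ) • w) ∧
      ∀ ω ∈ Set.Icc (-Real.pi) Real.pi, ∀ ν : ℝ,
        (∃ w : Fin k → ℂ, w ≠ 0 ∧ (GIom ω * (GIom ω)ᴴ).mulVec w = (ν : ℂ) • w) →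
          ν ≤ Lmax) :
    Filter.Tendsto lmin Filter.atTop (nhds Lmin) ∧
    Filter.Tendsto lmax Filter.atTop (nhds Lmax) := by
  have hb_le (i : Fin k) : b i ≤ b ⟨k - 1, by omega⟩ := hb.monotone (Nat.le_sub_one_of_lt i.isLt)
  have hspectrum (q : ℕ) : spectrum ℝ (slidingGram (selectedGenerator a b r hI)
      (blockOverhang k a (b ⟨k - 1, by omega⟩) ∘ I.orderEmbOfFin hI) q) =
      {μ | ∃ v, v ≠ 0 ∧ B q *ᵥ v = μ • v} := by
    rw [← map_gram_eq_slidingGram (hGmsg q) (hGpar q) hI, ← hB, spectrum_map_algebraMap]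
    exact Set.ext fun μ => mem_spectrum_real_iff_exists_mulVec_eq_smul
  have hGIom_eval (ω : ℝ) :
      (selectedGenerator a b r hI).map (Polynomial.eval (Circle.exp ω : ℂ)) = GIom ω := by
    ext i c
    exact (eval_systematicGenerator ω i _).trans (hGIom ω i c).symm
  have hsymbol : symbolSpectrum (selectedGenerator a b r hI) =
      {ν : ℝ | ∃ ω ∈ Set.Icc (-Real.pi) Real.pi, ∃ w, w ≠ 0 ∧
        (GIom ω * (GIom ω)ᴴ) *ᵥ w = (ν : ℂ) • w} := by
    simp only [← hGIom_eval]
    exact Set.ext fun ν => mem_symbolSpectrum_iff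
  refine gram_of_GI_extreme_eigenvalue_limits_general (selectedGenerator a b r hI) _
    (fun i c => natDegree_systematicGenerator_le a hb_le _ i (I.orderEmbOfFin hI c))
    lmin lmax ?_ ?_ Lmin Lmax ?_ ?_
  · exact fun q hq => hspectrum q ▸ ⟨(hlmin q hq).1, fun μ hμ => (hlmin q hq).2 μ hμ⟩
  · exact fun q hq => hspectrum q ▸ ⟨(hlmax q hq).1, fun μ hμ => (hlmax q hq).2 μ hμ⟩
  · exact hsymbol ▸ ⟨hLmin.1, fun ν ⟨ω, hω, hν⟩ => hLmin.2 ω hω ν hν⟩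
  · exact hsymbol ▸ ⟨hLmax.1, fun ν ⟨ω, hω, hν⟩ => hLmax.2 ω hω ν hν⟩
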